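/- Let (Φ, Ψ) be a jointly stationary pair of random measures on ℝ^d (the law of (T_tΦ, T_tΨ) equals the law of (Φ, Ψ) for every t) with intensities λ_Φ := E[Φ([0,1)^d)] and λ_Ψ := E[Ψ([0,1)^d)] both in (0,∞). Define the Palm distributions of the pair by P_Φ(B) = λ_Φ⁻¹ E[∫_{[0,1)^d} 1_B(T_xΦ, T_xΨ) dΦ(x)] and P_Ψ(B) = λ_Ψ⁻¹ E[∫_{[0,1)^d} 1_B(T_xΦ, T_xΨ) dΨ(x)] for measurable B ⊆ M(ℝ^d) × M(ℝ^d). Then for every measurable g : M(ℝ^d) × M(ℝ^d) × ℝ^d × ℝ^d → [0,∞] that is translation-covariant (g(T_tφ, T_tψ, x − t, y − t) = g(φ, ψ, x, y)), the exchange formula holds: λ_Φ ∫ (∫ g(φ, ψ, 0, y) dψ(y)) dP_Φ(φ, ψ) = λ_Ψ ∫ (∫ g(φ, ψ, y, 0) dφ(y)) dP_Ψ(φ, ψ). -/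

import Mathlib

open MeasureTheory ENNReal

noncomputable section

/-- `ℝ^d`. -/
abbrev Vec (d : ℕ) := Fin d → ℝ

/-- The shift `T_t ψ`, defined by `(T_t ψ)(A) = ψ(A + t)`. -/
def shiftM {d : ℕ} (t : Vec d) (ψ : Measure (Vec d)) : Measure (Vec d) :=
  ψ.map (fun x => x - t)

/-- A measure is in `M(ℝ^d)` iff it is finite on bounded sets. -/
def BddFinite {d : ℕ} (ψ : Measure (Vec d)) : Prop :=
  ∀ s : Set (Vec d), Bornology.IsBounded s → ψ s < ⊤

/-- Translation covariance of `g : M(ℝ^d) × ℝ^d × ℝ^d → [0,∞]`. -/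
def Covariant3 {d : ℕ} (g : Measure (Vec d) → Vec d → Vec d → ℝ≥0∞) : Prop :=
  ∀ (t x y : Vec d) (ψ : Measure (Vec d)), g (shiftM t ψ) (x - t) (y - t) = g ψ x y

/-- A random measure `Ψ` on a probability space `(Ω, P)` is mass-stationary if the mass
transport principle holds for every translation-covariant measurable `g`. -/
def MassStationary {d : ℕ} {Ω : Type*} [MeasurableSpace Ω] (P : Measure Ω)
    (Ψ : Ω → Measure (Vec d)) : Prop :=
  ∀ g : Measure (Vec d) → Vec d → Vec d → ℝ≥0∞,
    Measurable (fun p : Measure (Vec d) × Vec d × Vec d => g p.1 p.2.1 p.2.2) →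
    Covariant3 g →
    ∫⁻ ω, (∫⁻ y, g (Ψ ω) 0 y ∂(Ψ ω)) ∂P = ∫⁻ ω, (∫⁻ y, g (Ψ ω) y 0 ∂(Ψ ω)) ∂P

/-- The unit box `[0,1)^d`. -/
def unitBox (d : ℕ) : Set (Vec d) := Set.univ.pi fun _ : Fin d => Set.Ico (0 : ℝ) 1


open ProbabilityTheory

namespace Neveu

abbrev S (d : ℕ) := Measure (Vec d) × Measure (Vec d)

lemma bddFinite_iff {d : ℕ} (φ : Measure (Vec d)) :
    BddFinite φ ↔ ∀ n : ℕ, φ (Metric.closedBall 0 n) < ⊤ := by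
  constructor
  · intro h n
    exact h _ Metric.isBounded_closedBall
  · intro h s hs
    obtain ⟨r, hr⟩ := hs.subset_closedBall 0
    obtain ⟨n, hn⟩ := exists_nat_ge r
    exact (measure_mono (hr.trans (Metric.closedBall_subset_closedBall hn))).trans_lt (h n)

lemma measurableSet_bdd (d : ℕ) : MeasurableSet {φ : Measure (Vec d) | BddFinite φ} := by
  simp only [bddFinite_iff, Set.setOf_forall]
  refine MeasurableSet.iInter fun n => ?_
  exact measurableSet_lt (Measure.measurable_coe Metric.isClosed_closedBall.measurableSet)
    measurable_const

lemma sfinite_of_finite {α β : Type*} [MeasurableSpace α] [MeasurableSpace β]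
    (κ : Kernel α β) (h : ∀ a, κ a Set.univ < ⊤) : IsSFiniteKernel κ := by
  have hm : Measurable fun a => κ a Set.univ := Kernel.measurable_coe κ MeasurableSet.univ
  let η : Kernel α β := ⟨fun a => (κ a Set.univ)⁻¹ • κ a, by
    refine Measure.measurable_of_measurable_coe _ fun s hs => ?_
    simp only [Measure.smul_apply, smul_eq_mul]
    exact hm.inv.mul (Kernel.measurable_coe κ hs)⟩
  have hη : ∀ a, η a = (κ a Set.univ)⁻¹ • κ a := fun a => rfl
  haveI : IsFiniteKernel η := ⟨1, ENNReal.one_lt_top, fun a => by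
    rw [hη, Measure.smul_apply, smul_eq_mul]
    exact ENNReal.inv_mul_le_one _⟩
  have hu : Measurable (Function.uncurry fun (a : α) (_ : β) => κ a Set.univ) :=
    hm.comp measurable_fst
  have : κ = Kernel.withDensity η (fun a _ => ((κ a Set.univ).toNNReal : ℝ≥0∞)) := by
    have e : (fun (a : α) (_ : β) => ((κ a Set.univ).toNNReal : ℝ≥0∞))
        = fun a _ => κ a Set.univ := by
      funext a b
      exact ENNReal.coe_toNNReal (h a).ne
    rw [e]
    ext a : 1
    rw [Kernel.withDensity_apply _ hu, withDensity_const, hη, smul_smul]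
    by_cases h0 : κ a Set.univ = 0
    · rw [Measure.measure_univ_eq_zero.mp h0]; simp
    · rw [ENNReal.mul_inv_cancel h0 (h a).ne, one_smul]
  rw [this]
  exact Kernel.IsSFiniteKernel.withDensity η (fun _ _ => ENNReal.coe_ne_top)

open Classical in
/-- truncated identity kernel -/
def K (d : ℕ) : Kernel (Measure (Vec d)) (Vec d) :=
  ⟨fun φ => if BddFinite φ then φ else 0,
    Measurable.ite (measurableSet_bdd d) measurable_id measurable_const⟩

lemma K_of {d : ℕ} {φ : Measure (Vec d)} (h : BddFinite φ) : K d φ = φ := if_pos h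

lemma K_bdd {d : ℕ} (φ : Measure (Vec d)) : BddFinite (K d φ) := by
  by_cases h : BddFinite φ
  · rw [K_of h]; exact h
  · have : K d φ = 0 := if_neg h
    rw [this]
    intro s _
    simp

instance (d : ℕ) : IsSFiniteKernel (K d) := by
  let A : ℕ → Set (Vec d) := disjointed fun n : ℕ => Metric.closedBall 0 (n : ℝ)
  have hA : ∀ n, MeasurableSet (A n) :=
    MeasurableSet.disjointed fun n => Metric.isClosed_closedBall.measurableSet
  have hU : ⋃ n, A n = Set.univ := by
    rw [iUnion_disjointed]
    exact Metric.iUnion_closedBall_nat 0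
  have : K d = Kernel.sum fun n => (K d).restrict (hA n) := by
    ext φ : 1
    rw [Kernel.sum_apply]
    simp only [Kernel.restrict_apply]
    rw [← Measure.restrict_iUnion (disjoint_disjointed _) hA, hU, Measure.restrict_univ]
  rw [this]
  haveI : ∀ n, IsSFiniteKernel ((K d).restrict (hA n)) := fun n => by
    refine sfinite_of_finite _ fun φ => ?_
    rw [Kernel.restrict_apply, Measure.restrict_apply_univ]
    exact K_bdd φ _ (Metric.isBounded_closedBall.subset (disjointed_subset _ n))
  infer_instance

lemma shift_bdd {d : ℕ} {φ : Measure (Vec d)} (h : BddFinite φ) (x : Vec d) :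
    BddFinite (shiftM x φ) := by
  rw [bddFinite_iff]
  intro n
  rw [shiftM, Measure.map_apply (by fun_prop) Metric.isClosed_closedBall.measurableSet]
  refine h _ ((Metric.isBounded_closedBall (x := (x : Vec d)) (r := n)).subset ?_)
  intro y hy
  simpa [dist_eq_norm] using hy

lemma measurable_shift (d : ℕ) :
    Measurable fun q : Measure (Vec d) × Vec d => shiftM q.2 (K d q.1) := by
  refine Measure.measurable_of_measurable_coe _ fun s hs => ?_
  have : ∀ q : Measure (Vec d) × Vec d, shiftM q.2 (K d q.1) s
      = Kernel.prodMkRight (Vec d) (K d) q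
        (Prod.mk q ⁻¹' {r : (Measure (Vec d) × Vec d) × Vec d | r.2 - r.1.2 ∈ s}) := by
    intro q
    rw [shiftM, Measure.map_apply (by fun_prop) hs]
    rfl
  simp only [this]
  refine Kernel.measurable_kernel_prodMk_left ?_
  have hf : Measurable fun r : (Measure (Vec d) × Vec d) × Vec d => r.2 - r.1.2 := by fun_prop
  exact hf hs

def K1 (d : ℕ) : Kernel (S d) (Vec d) := (K d).comap Prod.fst measurable_fst
def K2 (d : ℕ) : Kernel (S d) (Vec d) := (K d).comap Prod.snd measurable_snd
instance (d : ℕ) : IsSFiniteKernel (K1 d) := by unfold K1; infer_instance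
instance (d : ℕ) : IsSFiniteKernel (K2 d) := by unfold K2; infer_instance

def N {d : ℕ} (p : S d) : S d := (K1 d p, K2 d p)
def T {d : ℕ} (q : S d × Vec d) : S d := (shiftM q.2 (K1 d q.1), shiftM q.2 (K2 d q.1))

lemma measurable_N {d : ℕ} : Measurable (N (d := d)) :=
  (K1 d).measurable.prodMk (K2 d).measurable

lemma measurable_T {d : ℕ} : Measurable (T (d := d)) := by
  refine Measurable.prodMk ?_ ?_
  · exact (measurable_shift d).comp
      ((measurable_fst.comp measurable_fst).prodMk measurable_snd)
  · exact (measurable_shift d).comp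
      ((measurable_snd.comp measurable_fst).prodMk measurable_snd)

lemma K1_T {d : ℕ} (p : S d) (x : Vec d) : K1 d (T (p, x)) = shiftM x (K1 d p) :=
  K_of (shift_bdd (K_bdd _) _)
lemma K2_T {d : ℕ} (p : S d) (x : Vec d) : K2 d (T (p, x)) = shiftM x (K2 d p) :=
  K_of (shift_bdd (K_bdd _) _)

def good (d : ℕ) : Set (S d) := {p | BddFinite p.1 ∧ BddFinite p.2}

lemma measurableSet_good (d : ℕ) : MeasurableSet (good d) :=
  (measurable_fst (measurableSet_bdd d)).inter (measurable_snd (measurableSet_bdd d))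

lemma T_good {d : ℕ} (q : S d × Vec d) : T q ∈ good d :=
  ⟨shift_bdd (K_bdd _) _, shift_bdd (K_bdd _) _⟩

lemma measurableSet_box (d : ℕ) : MeasurableSet (unitBox d) :=
  MeasurableSet.univ_pi fun _ => measurableSet_Ico

lemma lintegral_shift {d : ℕ} (φ : Measure (Vec d)) (x : Vec d) (f : Vec d → ℝ≥0∞) :
    ∫⁻ y, f y ∂(shiftM x φ) = ∫⁻ y, f (y - x) ∂φ := by
  have := (Homeomorph.subRight x).measurableEmbedding.lintegral_map (μ := φ) f
  exact this

/-- Palm measure as an integral -/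
lemma palm_lintegral {d : ℕ} (Q : Measure (S d)) [SFinite Q] (κ : Kernel (S d) (Vec d))
    [IsSFiniteKernel κ] (l : ℝ≥0∞) (W : Measure (S d))
    (hR : ∀ B, MeasurableSet B → l * W B = ∫⁻ p, ∫⁻ x in unitBox d,
      B.indicator (fun _ => (1 : ℝ≥0∞)) (T (p, x)) ∂(κ p) ∂Q)
    (F : S d → ℝ≥0∞) (hF : Measurable F) :
    l * ∫⁻ p, F p ∂W = ∫⁻ p, ∫⁻ x in unitBox d, F (T (p, x)) ∂(κ p) ∂Q := by
  have key : ∀ F : S d → ℝ≥0∞, Measurable F →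
      ∫⁻ p, F p ∂((Q ⊗ₘ (κ.restrict (measurableSet_box d))).map T)
        = ∫⁻ p, ∫⁻ x in unitBox d, F (T (p, x)) ∂(κ p) ∂Q := by
    intro F hF
    rw [lintegral_map hF measurable_T, Measure.lintegral_compProd (f := fun q => F (T q)) (hF.comp measurable_T)]
    simp only [Kernel.restrict_apply]
  have : l • W = (Q ⊗ₘ (κ.restrict (measurableSet_box d))).map T := by
    ext B hB
    rw [Measure.smul_apply, smul_eq_mul, hR B hB, ← key _ (measurable_const.indicator hB),
      lintegral_indicator_const hB, one_mul]
  rw [← key F hF, ← this, lintegral_smul_measure, smul_eq_mul]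

lemma palm_good {d : ℕ} (Q : Measure (S d)) (κ : Kernel (S d) (Vec d))
    (l : ℝ≥0∞) (hl : l ≠ 0) (W : Measure (S d))
    (hR : ∀ B, MeasurableSet B → l * W B = ∫⁻ p, ∫⁻ x in unitBox d,
      B.indicator (fun _ => (1 : ℝ≥0∞)) (T (p, x)) ∂(κ p) ∂Q) :
    ∀ᵐ p ∂W, p ∈ good d := by
  have h := hR _ (measurableSet_good d).compl
  have h0 : ∀ q : S d × Vec d, (good d)ᶜ.indicator (fun _ => (1 : ℝ≥0∞)) (T q) = 0 := fun q =>
    Set.indicator_of_notMem (by simpa using T_good q) _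
  simp only [h0, lintegral_zero] at h
  exact (mul_eq_zero.mp h).resolve_left hl

lemma half {d : ℕ} (Q : Measure (S d)) [SFinite Q] (κ η : Kernel (S d) (Vec d))
    [IsSFiniteKernel κ] [IsSFiniteKernel η] (l : ℝ≥0∞) (W : Measure (S d))
    (hR : ∀ B, MeasurableSet B → l * W B = ∫⁻ p, ∫⁻ x in unitBox d,
      B.indicator (fun _ => (1 : ℝ≥0∞)) (T (p, x)) ∂(κ p) ∂Q)
    (hη : ∀ p x, η (T (p, x)) = shiftM x (η p))
    (G : S d → Vec d → Vec d → ℝ≥0∞)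
    (hG : Measurable fun q : S d × Vec d × Vec d => G q.1 q.2.1 q.2.2)
    (hGT : ∀ p x y, G (T (p, x)) 0 (y - x) = G (N p) x y) :
    l * ∫⁻ p, ∫⁻ y, G p 0 y ∂(η p) ∂W
      = ∫⁻ p, ∫⁻ x in unitBox d, ∫⁻ y, G (N p) x y ∂(η p) ∂(κ p) ∂Q := by
  rw [palm_lintegral Q κ l W hR (fun p => ∫⁻ y, G p 0 y ∂(η p))]
  · simp only [hη, lintegral_shift, hGT]
  · refine Measurable.lintegral_kernel_prod_right (κ := η) ?_
    exact hG.comp (measurable_fst.prodMk (measurable_const.prodMk measurable_snd))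

/-- translated boxes -/
def box {d : ℕ} (z : Fin d → ℤ) : Set (Vec d) := {y | (y - fun i => (z i : ℝ)) ∈ unitBox d}

lemma measurableSet_box' {d : ℕ} (z : Fin d → ℤ) : MeasurableSet (box z) := by
  have hf : Measurable fun y : Vec d => y - fun i => (z i : ℝ) := by fun_prop
  exact hf (measurableSet_box d)

lemma mem_box {d : ℕ} (z : Fin d → ℤ) (y : Vec d) : y ∈ box z ↔ z = fun i => ⌊y i⌋ := by
  simp only [box, unitBox, Set.mem_setOf_eq, Set.mem_univ_pi, Pi.sub_apply, Set.mem_Ico,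
    funext_iff]
  refine forall_congr' fun i => ?_
  rw [eq_comm, Int.floor_eq_iff]
  constructor <;> rintro ⟨h1, h2⟩ <;> constructor <;> linarith

lemma tsum_box {d : ℕ} (y : Vec d) :
    ∑' z : Fin d → ℤ, (box z).indicator (fun _ => (1 : ℝ≥0∞)) y = 1 := by
  rw [tsum_eq_single (fun i => ⌊y i⌋)]
  · exact Set.indicator_of_mem ((mem_box _ _).mpr rfl) _
  · intro z hz
    exact Set.indicator_of_notMem (fun h => hz ((mem_box _ _).mp h)) _

/-- integral of `G` over `A × B` -/
def H {d : ℕ} (G : S d → Vec d → Vec d → ℝ≥0∞) (A B : Vec d → ℝ≥0∞) (p : S d) : ℝ≥0∞ :=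
  ∫⁻ x, ∫⁻ y, A x * B y * G (N p) x y ∂(K2 d p) ∂(K1 d p)

lemma measurable_integrand {d : ℕ} {G : S d → Vec d → Vec d → ℝ≥0∞}
    (hG : Measurable fun q : S d × Vec d × Vec d => G q.1 q.2.1 q.2.2)
    {A B : Vec d → ℝ≥0∞} (hA : Measurable A) (hB : Measurable B) :
    Measurable fun q : (S d × Vec d) × Vec d => A q.1.2 * B q.2 * G (N q.1.1) q.1.2 q.2 := by
  refine Measurable.mul (by fun_prop) ?_
  have h1 : Measurable fun q : (S d × Vec d) × Vec d => (N q.1.1, q.1.2, q.2) :=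
    (measurable_N.comp (measurable_fst.comp measurable_fst)).prodMk (by fun_prop)
  exact hG.comp h1

lemma measurable_inner {d : ℕ} {G : S d → Vec d → Vec d → ℝ≥0∞}
    (hG : Measurable fun q : S d × Vec d × Vec d => G q.1 q.2.1 q.2.2)
    {A B : Vec d → ℝ≥0∞} (hA : Measurable A) (hB : Measurable B) :
    Measurable fun q : S d × Vec d => ∫⁻ y, A q.2 * B y * G (N q.1) q.2 y ∂(K2 d q.1) :=
  Measurable.lintegral_kernel_prod_right (κ := Kernel.prodMkRight (Vec d) (K2 d))
    (measurable_integrand hG hA hB)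

lemma measurable_H {d : ℕ} {G : S d → Vec d → Vec d → ℝ≥0∞}
    (hG : Measurable fun q : S d × Vec d × Vec d => G q.1 q.2.1 q.2.2)
    {A B : Vec d → ℝ≥0∞} (hA : Measurable A) (hB : Measurable B) : Measurable (H G A B) :=
  Measurable.lintegral_kernel_prod_right (κ := K1 d) (measurable_inner hG hA hB)

lemma N_T {d : ℕ} (p : S d) (x : Vec d) : N (T (p, x)) = T (p, x) :=
  Prod.ext (K1_T p x) (K2_T p x)

lemma H_shift {d : ℕ} {G : S d → Vec d → Vec d → ℝ≥0∞}
    (hGT : ∀ t p x y, G (T (p, t)) (x - t) (y - t) = G (N p) x y)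
    (A B : Vec d → ℝ≥0∞) (p : S d) (t : Vec d) :
    H G A B (T (p, t)) = H G (fun x => A (x - t)) (fun y => B (y - t)) p := by
  unfold H
  rw [K1_T, K2_T, N_T]
  simp only [lintegral_shift, hGT]

abbrev ind {d : ℕ} (A : Set (Vec d)) : Vec d → ℝ≥0∞ := A.indicator fun _ => 1

lemma H_sum_right {d : ℕ} {G : S d → Vec d → Vec d → ℝ≥0∞}
    (hG : Measurable fun q : S d × Vec d × Vec d => G q.1 q.2.1 q.2.2)
    {A : Vec d → ℝ≥0∞} (hA : Measurable A) (p : S d) :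
    H G A 1 p = ∑' z : Fin d → ℤ, H G A (ind (box z)) p := by
  unfold H
  have hm : ∀ z : Fin d → ℤ, Measurable (ind (box z)) := fun z =>
    measurable_const.indicator (measurableSet_box' z)
  rw [← lintegral_tsum]
  · congr 1 with x
    rw [← lintegral_tsum]
    · congr 1 with y
      rw [ENNReal.tsum_mul_right, ENNReal.tsum_mul_left, tsum_box]
      rfl
    · intro z
      exact ((measurable_integrand hG hA (hm z)).comp
        (measurable_prodMk_left (x := (p, x)))).aemeasurable
  · intro z
    exact ((measurable_inner hG hA (hm z)).comp (measurable_prodMk_left (x := p))).aemeasurable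

lemma H_sum_left {d : ℕ} {G : S d → Vec d → Vec d → ℝ≥0∞}
    (hG : Measurable fun q : S d × Vec d × Vec d => G q.1 q.2.1 q.2.2)
    {B : Vec d → ℝ≥0∞} (hB : Measurable B) (p : S d) :
    H G 1 B p = ∑' z : Fin d → ℤ, H G (ind (box z)) B p := by
  unfold H
  have hm : ∀ z : Fin d → ℤ, Measurable (ind (box z)) := fun z =>
    measurable_const.indicator (measurableSet_box' z)
  rw [← lintegral_tsum]
  · congr 1 with x
    rw [← lintegral_tsum]
    · congr 1 with y
      rw [ENNReal.tsum_mul_right, ENNReal.tsum_mul_right, tsum_box]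
      rfl
    · intro z
      exact ((measurable_integrand hG (hm z) hB).comp
        (measurable_prodMk_left (x := (p, x)))).aemeasurable
  · intro z
    exact ((measurable_inner hG (hm z) hB).comp (measurable_prodMk_left (x := p))).aemeasurable

lemma transport {d : ℕ} (Q : Measure (S d)) 
    (hQ : ∀ t : Vec d, Q.map (fun p => T (p, t)) = Q)
    {G : S d → Vec d → Vec d → ℝ≥0∞}
    (hG : Measurable fun q : S d × Vec d × Vec d => G q.1 q.2.1 q.2.2)
    (hGT : ∀ t p x y, G (T (p, t)) (x - t) (y - t) = G (N p) x y) :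
    ∫⁻ p, H G (ind (unitBox d)) 1 p ∂Q = ∫⁻ p, H G 1 (ind (unitBox d)) p ∂Q := by
  have hm : ∀ z : Fin d → ℤ, Measurable (ind (box z)) := fun z =>
    measurable_const.indicator (measurableSet_box' z)
  have hu : Measurable (ind (unitBox d)) := measurable_const.indicator (measurableSet_box d)
  simp only [H_sum_right hG hu, H_sum_left hG hu]
  rw [lintegral_tsum fun z => (measurable_H hG hu (hm z)).aemeasurable,
    lintegral_tsum fun z => (measurable_H hG (hm z) hu).aemeasurable]
  rw [← (Equiv.neg (Fin d → ℤ)).tsum_eq]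
  congr 1 with z
  have hTm : Measurable fun p : S d => T (p, fun i => (z i : ℝ)) :=
    measurable_T.comp (measurable_id.prodMk measurable_const)
  conv_lhs => rw [← hQ fun i => (z i : ℝ)]
  rw [lintegral_map (measurable_H hG hu (hm _)) hTm]
  congr 1 with p
  rw [H_shift hGT]
  congr 1
  · funext y
    simp only [ind, Set.indicator, box, unitBox, Set.mem_setOf_eq, Set.mem_univ_pi, Pi.sub_apply,
      Equiv.neg_apply, Pi.neg_apply, Int.cast_neg, sub_neg_eq_add, sub_add_cancel]

end Neveu

open Neveu

/-- Neveu's exchange formula.  Let `(Φ, Ψ)` be a jointly stationary pair of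
random measures on `ℝ^d` with intensities `λ_Φ, λ_Ψ ∈ (0,∞)` and Palm distributions `P_Φ`,
`P_Ψ` (of the pair).  Then for every translation-covariant measurable
`g : M(ℝ^d) × M(ℝ^d) × ℝ^d × ℝ^d → [0,∞]`,
`λ_Φ ∫ (∫ g φ ψ 0 y dψ(y)) dP_Φ(φ,ψ) = λ_Ψ ∫ (∫ g φ ψ y 0 dφ(y)) dP_Ψ(φ,ψ)`. -/
theorem stmt15 {d : ℕ} {Ω : Type*} [MeasurableSpace Ω] (P : Measure Ω) [IsProbabilityMeasure P]
    (Φ Ψ : Ω → Measure (Vec d)) (hΦm : Measurable Φ) (hΨm : Measurable Ψ)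
    (hbfΦ : ∀ᵐ ω ∂P, BddFinite (Φ ω)) (hbfΨ : ∀ᵐ ω ∂P, BddFinite (Ψ ω))
    (hstat : ∀ t : Vec d,
      P.map (fun ω => (shiftM t (Φ ω), shiftM t (Ψ ω))) = P.map (fun ω => (Φ ω, Ψ ω)))
    (lΦ lΨ : ℝ≥0∞)
    (hlΦ : lΦ = ∫⁻ ω, Φ ω (unitBox d) ∂P) (hlΨ : lΨ = ∫⁻ ω, Ψ ω (unitBox d) ∂P)
    (hΦpos : 0 < lΦ) (hΦfin : lΦ < ⊤) (hΨpos : 0 < lΨ) (hΨfin : lΨ < ⊤)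
    (PΦ PΨ : Measure (Measure (Vec d) × Measure (Vec d)))
    (hPΦ : ∀ B : Set (Measure (Vec d) × Measure (Vec d)), MeasurableSet B →
      PΦ B = lΦ⁻¹ * ∫⁻ ω, (∫⁻ x in unitBox d,
        B.indicator (fun _ => (1 : ℝ≥0∞)) (shiftM x (Φ ω), shiftM x (Ψ ω)) ∂(Φ ω)) ∂P)
    (hPΨ : ∀ B : Set (Measure (Vec d) × Measure (Vec d)), MeasurableSet B →
      PΨ B = lΨ⁻¹ * ∫⁻ ω, (∫⁻ x in unitBox d,
        B.indicator (fun _ => (1 : ℝ≥0∞)) (shiftM x (Φ ω), shiftM x (Ψ ω)) ∂(Ψ ω)) ∂P)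
    (g : Measure (Vec d) → Measure (Vec d) → Vec d → Vec d → ℝ≥0∞)
    (hgm : Measurable (fun p : (Measure (Vec d) × Measure (Vec d)) × Vec d × Vec d =>
      g p.1.1 p.1.2 p.2.1 p.2.2))
    (hgcov : ∀ (t x y : Vec d) (φ ψ : Measure (Vec d)),
      g (shiftM t φ) (shiftM t ψ) (x - t) (y - t) = g φ ψ x y) :
    lΦ * ∫⁻ p, (∫⁻ y, g p.1 p.2 0 y ∂p.2) ∂PΦ
      = lΨ * ∫⁻ p, (∫⁻ y, g p.1 p.2 y 0 ∂p.1) ∂PΨ := by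
  have hm : Measurable fun ω => (Φ ω, Ψ ω) := hΦm.prodMk hΨm
  set Q : Measure (S d) := P.map (fun ω => (Φ ω, Ψ ω)) with hQdef
  haveI : IsProbabilityMeasure Q := Measure.isProbabilityMeasure_map hm.aemeasurable
  have hQ : ∀ t : Vec d, Q.map (fun p => T (p, t)) = Q := by
    intro t
    have hTm : Measurable fun p : S d => T (p, t) :=
      measurable_T.comp (measurable_id.prodMk measurable_const)
    conv_lhs => rw [hQdef]
    rw [ Measure.map_map hTm hm, ← hstat t]
    refine Measure.map_congr ?_
    filter_upwards [hbfΦ, hbfΨ] with ω h1 h2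
    change (shiftM t (K d (Φ ω)), shiftM t (K d (Ψ ω))) = _
    rw [K_of h1, K_of h2]
  have hB1 : ∀ B, MeasurableSet B → Measurable fun q : S d × Vec d =>
      B.indicator (fun _ => (1 : ℝ≥0∞)) (T q) := fun B hB =>
    (measurable_const.indicator hB).comp measurable_T
  have hR1 : ∀ B, MeasurableSet B → lΦ * PΦ B = ∫⁻ p, ∫⁻ x in unitBox d,
      B.indicator (fun _ => (1 : ℝ≥0∞)) (T (p, x)) ∂(K1 d p) ∂Q := by
    intro B hB
    rw [hPΦ B hB, ← mul_assoc, ENNReal.mul_inv_cancel hΦpos.ne' hΦfin.ne, one_mul, hQdef,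
      lintegral_map (Measurable.setLIntegral_kernel_prod_right (κ := K1 d)
        (f := fun p x => B.indicator (fun _ => (1 : ℝ≥0∞)) (T (p, x)))
        (hB1 B hB) (measurableSet_box d)) hm]
    refine lintegral_congr_ae ?_
    filter_upwards [hbfΦ, hbfΨ] with ω h1 h2
    change _ = ∫⁻ x in unitBox d, B.indicator (fun _ => (1 : ℝ≥0∞))
      (shiftM x (K d (Φ ω)), shiftM x (K d (Ψ ω))) ∂(K d (Φ ω))
    rw [K_of h1, K_of h2]
  have hR2 : ∀ B, MeasurableSet B → lΨ * PΨ B = ∫⁻ p, ∫⁻ x in unitBox d,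
      B.indicator (fun _ => (1 : ℝ≥0∞)) (T (p, x)) ∂(K2 d p) ∂Q := by
    intro B hB
    rw [hPΨ B hB, ← mul_assoc, ENNReal.mul_inv_cancel hΨpos.ne' hΨfin.ne, one_mul, hQdef,
      lintegral_map (Measurable.setLIntegral_kernel_prod_right (κ := K2 d)
        (f := fun p x => B.indicator (fun _ => (1 : ℝ≥0∞)) (T (p, x)))
        (hB1 B hB) (measurableSet_box d)) hm]
    refine lintegral_congr_ae ?_
    filter_upwards [hbfΦ, hbfΨ] with ω h1 h2
    change _ = ∫⁻ x in unitBox d, B.indicator (fun _ => (1 : ℝ≥0∞))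
      (shiftM x (K d (Φ ω)), shiftM x (K d (Ψ ω))) ∂(K d (Ψ ω))
    rw [K_of h1, K_of h2]
  let G : S d → Vec d → Vec d → ℝ≥0∞ := fun p x y => g p.1 p.2 x y
  have hG : Measurable fun q : S d × Vec d × Vec d => G q.1 q.2.1 q.2.2 := hgm
  have hGT : ∀ t p x y, G (T (p, t)) (x - t) (y - t) = G (N p) x y :=
    fun t p x y => hgcov t x y _ _
  have e1 : ∫⁻ p, (∫⁻ y, g p.1 p.2 0 y ∂p.2) ∂PΦ = ∫⁻ p, ∫⁻ y, G p 0 y ∂(K2 d p) ∂PΦ := by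
    refine lintegral_congr_ae ?_
    filter_upwards [palm_good Q (K1 d) lΦ hΦpos.ne' PΦ hR1] with p hp
    rw [show K2 d p = p.2 from K_of hp.2]
  have e2 : ∫⁻ p, (∫⁻ y, g p.1 p.2 y 0 ∂p.1) ∂PΨ = ∫⁻ p, ∫⁻ y, G p y 0 ∂(K1 d p) ∂PΨ := by
    refine lintegral_congr_ae ?_
    filter_upwards [palm_good Q (K2 d) lΨ hΨpos.ne' PΨ hR2] with p hp
    rw [show K1 d p = p.1 from K_of hp.1]
  have hG' : Measurable fun q : S d × Vec d × Vec d => G q.1 q.2.2 q.2.1 :=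
    hG.comp (measurable_fst.prodMk
      ((measurable_snd.comp measurable_snd).prodMk (measurable_fst.comp measurable_snd)))
  rw [e1, e2, half Q (K1 d) (K2 d) lΦ PΦ hR1 K2_T G hG
      (fun p x y => by simpa using hGT x p x y),
    half Q (K2 d) (K1 d) lΨ PΨ hR2 K1_T (fun p x y => G p y x) hG'
      (fun p x y => by simpa using hGT x p y x)]
  have hu : Measurable (ind (unitBox d)) := measurable_const.indicator (measurableSet_box d)
  have hGp : ∀ p : S d, Measurable fun r : Vec d × Vec d => G (N p) r.1 r.2 := fun p =>
    hG.comp measurable_prodMk_left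
  have f1 : ∀ p : S d, ∫⁻ x in unitBox d, ∫⁻ y, G (N p) x y ∂(K2 d p) ∂(K1 d p)
      = H G (ind (unitBox d)) 1 p := by
    intro p
    rw [← lintegral_indicator (measurableSet_box d)]
    unfold H
    congr 1 with x
    by_cases hx : x ∈ unitBox d <;> simp [ind, hx]
  have f2 : ∀ p : S d, ∫⁻ y in unitBox d, ∫⁻ x, G (N p) x y ∂(K1 d p) ∂(K2 d p)
      = H G 1 (ind (unitBox d)) p := by
    intro p
    rw [← lintegral_indicator (measurableSet_box d)]
    unfold H
    rw [lintegral_lintegral_swap]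
    · congr 1 with y
      by_cases hy : y ∈ unitBox d <;> simp [ind, hy]
    · exact ((measurable_const.mul (hu.comp measurable_snd)).mul (hGp p)).aemeasurable
  simp only [f1, f2]
  exact transport Q hQ hG hGT
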